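/- Let M be a set equipped with a ternary operation x ◁ y ▷ z and distinguished elements T and F that satisfies the axioms (CP1) x ◁ T ▷ y = x, (CP2) x ◁ F ▷ y = y, (CP3) T ◁ x ▷ F = x, (CP4) x ◁ (y ◁ z ▷ u) ▷ v = (x ◁ y ▷ v) ◁ z ▷ (x ◁ u ▷ v), and (CPmem) x ◁ y ▷ (z ◁ u ▷ (v ◁ y ▷ w)) = x ◁ y ▷ (z ◁ u ▷ w) for all elements. Then M satisfies the axiom (CL1) T ◁ (y ◁ x ▷ F) ▷ (x ◁ y ▷ F) = T ◁ (x ◁ y ▷ F) ▷ (y ◁ x ▷ F) for all elements if and only if M satisfies the axiom (CL2) (x ◁ y ▷ z) ◁ u ▷ (v ◁ y ▷ w) = (x ◁ u ▷ v) ◁ y ▷ (z ◁ u ▷ w) for all elements. -/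

import Mathlib

/-!
Read `c x y z` as the decision tree "test `y`, then go to `x`, else to `z`".  The element
`c F y T` acts as the negation of `y`, and exchanges the two branches of a test.  Combined with
this symmetry, (CPmem) says that a test on `y` below a branch of an earlier test on `y` may be
replaced by the outcome already known.

By (CP4) and memory, the two sides of (CL1) are the trees `c y x (c x y F)` and
`c x y (c y x F)`.  (CL2) identifies them.

Conversely, substituting the two trees of (CL1) as the condition of `c p _ q` gives the instance of
(CL2) in which three of the four leaves are equal to `q` and the leaf reached by two positive tests
is `p`.  If (CL2) holds for some choice of leaves, apply that instance with `q` the common value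
`R` of the two trees: memory collapses the copies of `R`, leaving the same tree with its
first leaf replaced by `p`.  So the first leaf can be changed at will, and by negating tests so can
any other leaf; starting from four equal leaves this yields (CL2).
-/

/-- In any algebra with a ternary conditional `c x y z` (read `x ◁ y ▷ z`,
i.e. "if y then x else z") and constants T, F satisfying (CP1)–(CP4) and (CPmem),
the axiom (CL1) holds for all elements iff the axiom (CL2) holds for all elements. -/
theorem stmt_0 {M : Type*} (c : M → M → M → M) (T F : M)
    (cp1 : ∀ x y, c x T y = x)
    (cp2 : ∀ x y, c x F y = y)
    (cp3 : ∀ x, c T x F = x)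
    (cp4 : ∀ x y z u v, c x (c y z u) v = c (c x y v) z (c x u v))
    (cpmem : ∀ x y z u v w, c x y (c z u (c v y w)) = c x y (c z u w)) :
    (∀ x y, c T (c y x F) (c x y F) = c T (c x y F) (c y x F)) ↔
      (∀ x y z u v w, c (c x y z) u (c v y w) = c (c x u v) y (c z u w)) := by
  -- Negating a test exchanges its branches.
  have neg : ∀ p y q, c q (c F y T) p = c p y q := by
    intro p y q
    rw [cp4, cp1, cp2]
  -- The memory law for repeated tests in other positions; those on the left follow by negation.
  have mr : ∀ x y v w, c x y (c v y w) = c x y w := by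
    intro x y v w
    have h := cpmem x y T F v w
    rwa [cp2, cp2] at h
  have mr' : ∀ x y v w u z, c x y (c (c v y w) u z) = c x y (c w u z) := by
    intro x y v w u z
    rw [← neg (c v y w) u z, cpmem, neg]
  have ml : ∀ x y v w, c (c v y w) y x = c v y x := by
    intro x y v w
    rw [← neg (c v y w) y x, ← neg v y w, mr, neg]
  have ml' : ∀ x y z u v w, c (c z u (c v y w)) y x = c (c z u v) y x := by
    intro x y z u v w
    rw [← neg (c z u (c v y w)) y x, ← neg v y w, cpmem, neg]
  have side : ∀ x y, c T (c y x F) (c x y F) = c y x (c x y F) := by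
    intro x y
    rw [cp4, cp2, mr, cp3]
  -- Below a failed test on `x`, the element `x` itself is `F`.
  have known : ∀ p x y, c p x (c x y F) = c p x (c F y F) := by
    intro p x y
    have h := mr' p x T F y F
    rwa [cp3] at h
  constructor
  · intro cl1
    have comm : ∀ x y, c y x (c F y F) = c x y (c F x F) := by
      intro x y
      have h := cl1 x y
      rwa [side, side, known, known] at h
    have single : ∀ p q u y, c (c p y q) u (c q y q) = c (c p u q) y (c q u q) := by
      intro p q u y
      have h := congrArg (fun t => c p t q) (comm u y)
      simpa only [cp4, cp2] using h
    have change : ∀ x x' z v w u y,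
        c (c x' y z) u (c v y w) = c (c x' u v) y (c z u w) →
        c (c x y z) u (c v y w) = c (c x u v) y (c z u w) := by
      intro x x' z v w u y h
      -- The tree with leaves `x, R, R, R` collapses to the one with leaves `x, z, v, w`.
      have collapse : ∀ z v u y, ∀ R, R = c (c x' y z) u (c v y w) →
          c (c x y R) u (c R y R) = c (c x y z) u (c v y w) := by
        intro z v u y R hR
        have e1 : ∀ Q, c (c x y R) u Q = c (c x y z) u Q := by
          intro Q
          rw [hR, ml', mr]
        have e2 : ∀ P, c P u (c R y R) = c P u (c v y w) := by
          intro P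
          rw [hR, cpmem, mr', ml, mr]
        rw [e1, e2]
      rw [← collapse z v u y _ rfl, ← collapse v z y u _ h]
      exact single _ _ _ _
    intro x y z u v w
    -- The three leaves other than `w` are put in place one by one; negating `y` or `u`
    -- brings the leaf to be changed into first position.
    have h₂ := change z w w w w u (c F y T)
    simp only [neg] at h₂
    have h₃ := change v w w w z (c F u T) y
    simp only [neg] at h₃
    exact change x w z v w u y (h₃ (h₂ (single w w u y)))
  · intro cl2 x y
    rw [side, side, known, known]
    simpa only [cp3] using cl2 T y F x F F
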